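/- (Preservation of dual discrete orthogonality.) Let S be a constant symmetric real n×n matrix with bilinear form ⟨u, v⟩ = u S vᵀ on row vectors in ℝⁿ. Let H⃗, K⃗ : ℤ² → ℝⁿ and p, q, Γ : ℤ² → ℝ with Γ² = 1 − pq, Γ ≠ 0 everywhere satisfy H⃗₍₂₎ = (H⃗ + pK⃗)/Γ, K⃗₍₁₎ = (K⃗ + qH⃗)/Γ and 2⟨H⃗, K⃗⟩ + p⟨K⃗, K⃗⟩ + q⟨H⃗, H⃗⟩ = 0 at every lattice point. Let scalars X, Y satisfy X₍₂₎ = (X + qY)/Γ, Y₍₁₎ = (Y + pX)/Γ, let λ > 0, let M⃗* satisfy M⃗*₍₁₎ − M⃗* = X·H⃗, M⃗*₍₂₎ − M⃗* = Y·K⃗, set H = λ⟨M⃗*₍₁₎ + M⃗*, H⃗⟩, K = λ⟨M⃗*₍₂₎ + M⃗*, K⃗⟩ and M = λ⟨M⃗*, M⃗*⟩, and assume M > 0 at every lattice point. Define H⃗' = √(M/M₍₁₎)(H⃗ − H M⃗*/M), K⃗' = √(M/M₍₂₎)(K⃗ − K M⃗*/M), p' = (M/√(M₍₁₎M₍₂₎))(p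 − YH/M), q' = (M/√(M₍₁₎M₍₂₎))(q − XK/M). Then at every lattice point ⟨H⃗', H⃗'⟩ = ⟨H⃗, H⃗⟩, ⟨K⃗', K⃗'⟩ = ⟨K⃗, K⃗⟩ and 2⟨H⃗', K⃗'⟩ + q'⟨H⃗', H⃗'⟩ + p'⟨K⃗', K⃗'⟩ = 0. -/

import Mathlib

/-!
Everything happens at a single lattice point. Write `a = ⟨H⃗, H⃗⟩`, `b = ⟨K⃗, K⃗⟩`, `c = ⟨M⃗*, H⃗⟩`,
`d = ⟨M⃗*, K⃗⟩`. The difference equations for `M⃗*` give `H = λ(2c + Xa)`, `K = λ(2d + Yb)`,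
`M₍₁₎ = M + XH` and `M₍₂₎ = M + YK`.

Since `⟨M⃗*, M⃗*⟩ = M/λ`, the norm identity follows from
`M ⟨H⃗ - (H/M) M⃗*, H⃗ - (H/M) M⃗*⟩ = Ma - 2Hc + H²/λ = (M + XH) a = M₍₁₎ a`
(`norm_transform`), and the one for `K⃗'` is the same computation. In the last identity the square
roots combine to the common factor `M / √(M₍₁₎ M₍₂₎)`. The remaining bracket is the original
orthogonality relation plus
`(-H(2d + Yb) - K(2c + Xa) + 2HK/λ) / M`, which vanishes by the formulas for `H` and `K`.
-/

noncomputable section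

/-- Shift in the first lattice direction: `f₍₁₎(n₁,n₂) = f(n₁+1,n₂)`. -/
def s1 (n : ℤ × ℤ) : ℤ × ℤ := (n.1 + 1, n.2)

/-- Shift in the second lattice direction: `f₍₂₎(n₁,n₂) = f(n₁,n₂+1)`. -/
def s2 (n : ℤ × ℤ) : ℤ × ℤ := (n.1, n.2 + 1)

/-- The bilinear form `⟨u, v⟩ = u S vᵀ` on row vectors in ℝⁿ given by a matrix `S`. -/
def formS {nn : ℕ} (S : Matrix (Fin nn) (Fin nn) ℝ) (u v : Fin nn → ℝ) : ℝ :=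
  ∑ i, ∑ j, u i * S i j * v j

section FormS

variable {nn : ℕ} (S : Matrix (Fin nn) (Fin nn) ℝ)

lemma formS_add_left (u v w : Fin nn → ℝ) : formS S (u + v) w = formS S u w + formS S v w := by
  simp [formS, add_mul, Finset.sum_add_distrib]

lemma formS_smul_left (r : ℝ) (u w : Fin nn → ℝ) : formS S (r • u) w = r * formS S u w := by
  simp [formS, Finset.mul_sum, mul_assoc]

lemma formS_comm (hS : S.IsSymm) (u v : Fin nn → ℝ) : formS S u v = formS S v u := by
  unfold formS
  rw [Finset.sum_comm]
  refine Finset.sum_congr rfl fun i _ => Finset.sum_congr rfl fun j _ => ?_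
  rw [hS.apply i j]
  ring

lemma formS_add_right (hS : S.IsSymm) (u v w : Fin nn → ℝ) :
    formS S w (u + v) = formS S w u + formS S w v := by
  simp only [formS_comm S hS w, formS_add_left]

lemma formS_smul_right (hS : S.IsSymm) (r : ℝ) (u w : Fin nn → ℝ) :
    formS S w (r • u) = r * formS S w u := by
  simp only [formS_comm S hS w, formS_smul_left]

lemma formS_sub_smul (hS : S.IsSymm) (u v m : Fin nn → ℝ) (r s α β : ℝ) :
    formS S (r • (u - α • m)) (s • (v - β • m)) =
      r * s * (formS S u v - α * formS S m v - β * formS S m u + α * β * formS S m m) := by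
  have e (x : Fin nn → ℝ) (t : ℝ) : x - t • m = x + (-t) • m := by
    rw [neg_smul, sub_eq_add_neg]
  simp only [e, formS_add_left, formS_smul_left, formS_add_right S hS, formS_smul_right S hS,
    formS_comm S hS u m]
  ring

/-- One lattice direction: `m`, `m₁` are the values of `M⃗*` at a point and at its shift, `v` is the
tangent vector, `x` the scalar coefficient, and `h`, `M`, `M₁` the values of the potentials. The
transformed tangent vector has the same norm as `v`; the first conclusion is the expanded form of
`h`. -/
lemma norm_transform (hS : S.IsSymm) {lam : ℝ} (m m₁ v : Fin nn → ℝ) {x h M M₁ : ℝ}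
    (hm : m₁ - m = x • v) (hh : h = lam * formS S (m₁ + m) v)
    (hM : M = lam * formS S m m) (hM₁ : M₁ = lam * formS S m₁ m₁) (hMpos : 0 < M)
    (hM₁pos : 0 < M₁) :
    h = lam * (2 * formS S m v + x * formS S v v) ∧
      formS S (Real.sqrt (M / M₁) • (v - (h / M) • m)) (Real.sqrt (M / M₁) • (v - (h / M) • m)) =
        formS S v v := by
  obtain rfl : m₁ = x • v + m := sub_eq_iff_eq_add.mp hm
  simp only [formS_add_left, formS_smul_left, formS_add_right S hS, formS_smul_right S hS,
    formS_comm S hS v m] at hh hM₁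
  have hh2 : h = lam * (2 * formS S m v + x * formS S v v) := by rw [hh]; ring
  refine ⟨hh2, ?_⟩
  rw [formS_sub_smul S hS, Real.mul_self_sqrt (by positivity)]
  have hM₁2 : M₁ = M + x * h := by rw [hM₁, hM, hh2]; ring
  -- This is `⟨M⃗*, M⃗*⟩ = M / λ` multiplied by `h`, with `λ` eliminated.
  have key : h * formS S m m = M * (2 * formS S m v + x * formS S v v) := by rw [hh2, hM]; ring
  field_simp
  linear_combination h * key - M * formS S v v * hM₁2

end FormS

/-- preservation of dual discrete orthogonality: with
`H = λ⟨M⃗*₍₁₎ + M⃗*, H⃗⟩`, `K = λ⟨M⃗*₍₂₎ + M⃗*, K⃗⟩` and `M = λ⟨M⃗*, M⃗*⟩ > 0`, the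
transformed dual tangent vectors satisfy `⟨H⃗', H⃗'⟩ = ⟨H⃗, H⃗⟩`, `⟨K⃗', K⃗'⟩ = ⟨K⃗, K⃗⟩`
and `2⟨H⃗', K⃗'⟩ + q'⟨H⃗', H⃗'⟩ + p'⟨K⃗', K⃗'⟩ = 0`. -/
theorem stmt_17 {nn : ℕ} (S : Matrix (Fin nn) (Fin nn) ℝ) (hS : S.IsSymm)
    (Hv Kv : ℤ × ℤ → Fin nn → ℝ) (p q Γ X Y : ℤ × ℤ → ℝ) (lam : ℝ) (hlam : 0 < lam)
    (Ms : ℤ × ℤ → Fin nn → ℝ) (H K M : ℤ × ℤ → ℝ)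
    (H' K' : ℤ × ℤ → Fin nn → ℝ) (p' q' : ℤ × ℤ → ℝ)
    (hΓ : ∀ n, Γ n ^ 2 = 1 - p n * q n) (hΓ0 : ∀ n, Γ n ≠ 0)
    (hHv : ∀ n, Hv (s2 n) = (Γ n)⁻¹ • (Hv n + p n • Kv n))
    (hKv : ∀ n, Kv (s1 n) = (Γ n)⁻¹ • (Kv n + q n • Hv n))
    (horth : ∀ n, 2 * formS S (Hv n) (Kv n) + p n * formS S (Kv n) (Kv n) +
        q n * formS S (Hv n) (Hv n) = 0)
    (hX : ∀ n, X (s2 n) = (Γ n)⁻¹ * (X n + q n * Y n))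
    (hY : ∀ n, Y (s1 n) = (Γ n)⁻¹ * (Y n + p n * X n))
    (hMs1 : ∀ n, Ms (s1 n) - Ms n = X n • Hv n)
    (hMs2 : ∀ n, Ms (s2 n) - Ms n = Y n • Kv n)
    (hHdef : ∀ n, H n = lam * formS S (Ms (s1 n) + Ms n) (Hv n))
    (hKdef : ∀ n, K n = lam * formS S (Ms (s2 n) + Ms n) (Kv n))
    (hMdef : ∀ n, M n = lam * formS S (Ms n) (Ms n))
    (hMpos : ∀ n, 0 < M n)
    (hH' : ∀ n, H' n = Real.sqrt (M n / M (s1 n)) • (Hv n - (H n / M n) • Ms n))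
    (hK' : ∀ n, K' n = Real.sqrt (M n / M (s2 n)) • (Kv n - (K n / M n) • Ms n))
    (hp' : ∀ n, p' n = M n / Real.sqrt (M (s1 n) * M (s2 n)) * (p n - Y n * H n / M n))
    (hq' : ∀ n, q' n = M n / Real.sqrt (M (s1 n) * M (s2 n)) * (q n - X n * K n / M n)) :
    ∀ n, formS S (H' n) (H' n) = formS S (Hv n) (Hv n) ∧
      formS S (K' n) (K' n) = formS S (Kv n) (Kv n) ∧
      2 * formS S (H' n) (K' n) + q' n * formS S (H' n) (H' n) +
        p' n * formS S (K' n) (K' n) = 0 := by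
  intro n
  obtain ⟨hH, hnH⟩ := norm_transform S hS (Ms n) (Ms (s1 n)) (Hv n) (hMs1 n) (hHdef n) (hMdef n)
    (hMdef (s1 n)) (hMpos n) (hMpos (s1 n))
  obtain ⟨hK, hnK⟩ := norm_transform S hS (Ms n) (Ms (s2 n)) (Kv n) (hMs2 n) (hKdef n) (hMdef n)
    (hMdef (s2 n)) (hMpos n) (hMpos (s2 n))
  rw [← hH' n] at hnH
  rw [← hK' n] at hnK
  refine ⟨hnH, hnK, ?_⟩
  have hM := hMpos n
  have hM1 := hMpos (s1 n)
  have hM2 := hMpos (s2 n)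
  have hsqrt : Real.sqrt (M n / M (s1 n)) * Real.sqrt (M n / M (s2 n)) =
      M n / Real.sqrt (M (s1 n) * M (s2 n)) := by
    rw [← Real.sqrt_mul (by positivity), div_mul_div_comm, Real.sqrt_div (by positivity),
      Real.sqrt_mul_self hM.le]
  rw [hnH, hnK, hH' n, hK' n, formS_sub_smul S hS, hsqrt, hp' n, hq' n]
  have horth := horth n
  have hMn := hMdef n
  -- As `⟨M⃗*, M⃗*⟩ = M / λ`, multiplying by `H` or `K` eliminates `λ`.
  have keyH : H n * formS S (Ms n) (Ms n) =
      M n * (2 * formS S (Ms n) (Hv n) + X n * formS S (Hv n) (Hv n)) := by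
    rw [hH, hMn]; ring
  have keyK : K n * formS S (Ms n) (Ms n) =
      M n * (2 * formS S (Ms n) (Kv n) + Y n * formS S (Kv n) (Kv n)) := by
    rw [hK, hMn]; ring
  have bracket : 2 * (formS S (Hv n) (Kv n) - H n / M n * formS S (Ms n) (Kv n) -
        K n / M n * formS S (Ms n) (Hv n) + H n / M n * (K n / M n) * formS S (Ms n) (Ms n)) +
      (q n - X n * K n / M n) * formS S (Hv n) (Hv n) +
      (p n - Y n * H n / M n) * formS S (Kv n) (Kv n) = 0 := by
    field_simp
    linear_combination M n ^ 2 * horth + K n * keyH + H n * keyK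
  linear_combination (M n / Real.sqrt (M (s1 n) * M (s2 n))) * bracket
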